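/- arXiv:2509.03935 — 3 statements merged into one kernel-verified Lean document; each statement's English description precedes it below -/
import Mathlib

section
/- Let n ≥ 1 and k ≥ 1 be natural numbers, let q = ⌊n/k⌋ and r = n − k·q, define the load-sharing block sizes n_c (c = 1,…,k) by n_c = q + 1 for 1 ≤ c ≤ r and n_c = q otherwise, and let T : Fin n → ℝ assign a processing time to each of n tasks. Fix any bijection e between the set of pairs {(c, m) : 1 ≤ c ≤ k, 1 ≤ m ≤ n_c} and Fin n (an assignment of the n queue slots to task positions). Then the average over all n! permutations σ of Fin n of the total delay ∑_{c=1}^{k} ∑_{m=1}^{n_c} (n_c − m + 1) · T(σ(e(c, m))) equals (1 − (k/(2n))·q)·(1 + q) · ∑_{j ∈ Fin n} T(j). -/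
/-!
By symmetry, every queue slot receives each task equally often as `σ` ranges over all
permutations, so the average of `T (σ i)` is the mean of `T` for every position `i`
(`card_mul_sum_perm_apply`). The expected delay is therefore the total weight of the slots times
`(∑ j, T j) / n`.

A queue of length `N` has total weight `N (N + 1) / 2` (`sum_queue_weight`). Since each queue has
length `N = q` or `N = q + 1`, in both cases `N (N + 1) = (q + 1) (2 N - q)`, which is affine
in `N`. Summing over the `k` queues, whose lengths add up to `n`, gives the total weight
`(q + 1) (2 n - k q) / 2`; the number of longer queues never has to be counted.
-/

/-- The average of `T (σ i)` over all permutations `σ` is the mean of `T`, written without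
division. The inner sum does not depend on `i`, because right multiplication by `swap i j`
permutes the group; summing it over all `i` counts `∑ j, T j` once per permutation. -/
theorem card_mul_sum_perm_apply (n : ℕ) (T : Fin n → ℝ) (i : Fin n) :
    (n : ℝ) * ∑ σ : Equiv.Perm (Fin n), T (σ i) = (n.factorial : ℝ) * ∑ j, T j := by
  have h_indep : ∀ j : Fin n,
      ∑ σ : Equiv.Perm (Fin n), T (σ j) = ∑ σ : Equiv.Perm (Fin n), T (σ i) := by
    intro j
    rw [← Equiv.sum_comp (Equiv.mulRight (Equiv.swap i j))
      (fun σ : Equiv.Perm (Fin n) => T (σ j))]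
    simp
  calc (n : ℝ) * ∑ σ : Equiv.Perm (Fin n), T (σ i)
      = ∑ j : Fin n, ∑ σ : Equiv.Perm (Fin n), T (σ j) := by
        simp [h_indep]
    _ = ∑ σ : Equiv.Perm (Fin n), ∑ j, T (σ j) := Finset.sum_comm
    _ = ∑ σ : Equiv.Perm (Fin n), ∑ j, T j :=
        Finset.sum_congr rfl fun σ _ => Equiv.sum_comp σ T
    _ = (n.factorial : ℝ) * ∑ j, T j := by
        simp [Fintype.card_perm]

theorem sum_queue_weight (N : ℕ) :
    ∑ m : Fin N, ((N - m.1 : ℕ) : ℝ) = (N : ℝ) * (N + 1) / 2 := by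
  induction N with
  | zero => simp
  | succ N ih =>
    rw [Fin.sum_univ_succ]
    simp only [Fin.val_zero, Fin.val_succ, Nat.add_sub_add_right, ih]
    push_cast
    ring

/-- Equation (7): with `q = ⌊n/k⌋`, `r = n - k*q`, load-sharing block sizes
`n_c = q+1` for the first `r` CPUs and `n_c = q` for the rest, processing
times `T : Fin n → ℝ`, and any bijection `e` from the queue slots
`{(c, m) : c < k, m < n_c}` to the `n` task positions, the average over all
`n!` permutations `σ` of the total delay
`∑_c ∑_{m=1}^{n_c} (n_c - m + 1) · T (σ (e (c, m)))` equals
`(1 - (k/(2n)) q)(1 + q) · ∑ j, T j`.  (Here the slot `(c, m)` is encoded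
0-indexed, so the weight `n_c - m + 1` reads `n_c - m` for `m < n_c`.) -/
theorem expected_total_delay (n k : ℕ) (hn : 1 ≤ n) (hk : 1 ≤ k)
    (nc : Fin k → ℕ)
    (hnc : ∀ c : Fin k,
      nc c = if c.1 + 1 ≤ n - k * (n / k) then n / k + 1 else n / k)
    (T : Fin n → ℝ)
    (e : (Σ c : Fin k, Fin (nc c)) ≃ Fin n) :
    (1 / (n.factorial : ℝ)) *
        ∑ σ : Equiv.Perm (Fin n),
          ∑ p : Σ c : Fin k, Fin (nc c),
            ((nc p.1 - p.2.1 : ℕ) : ℝ) * T (σ (e p))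
      = (1 - ((k : ℝ) / (2 * (n : ℝ))) * ((n / k : ℕ) : ℝ))
          * (1 + ((n / k : ℕ) : ℝ)) * ∑ j, T j := by
  have hn0 : (n : ℝ) ≠ 0 := by positivity
  have hf0 : (n.factorial : ℝ) ≠ 0 := by positivity
  -- The bijection `e` already forces the queue lengths to add up to `n`.
  have h_total : ∑ c, (nc c : ℝ) = n := by
    have h := Fintype.card_congr e
    simp only [Fintype.card_sigma, Fintype.card_fin] at h
    exact_mod_cast h
  have h_queue : ∀ c, (nc c : ℝ) * (nc c + 1) / 2
      = (((n / k : ℕ) : ℝ) + 1) / 2 * (2 * nc c - ((n / k : ℕ) : ℝ)) := by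
    intro c
    rw [hnc c]
    split_ifs
    · push_cast
      ring
    · ring
  have h_weight : ∑ p : Σ c : Fin k, Fin (nc c), ((nc p.1 - p.2.1 : ℕ) : ℝ)
      = (((n / k : ℕ) : ℝ) + 1) / 2 * (2 * n - k * ((n / k : ℕ) : ℝ)) := by
    rw [Fintype.sum_sigma]
    simp only [sum_queue_weight, h_queue]
    rw [← Finset.mul_sum, Finset.sum_sub_distrib, ← Finset.mul_sum, h_total]
    simp
  have h_slot : ∀ i : Fin n, ∑ σ : Equiv.Perm (Fin n), T (σ i)
      = (n.factorial : ℝ) * (∑ j, T j) / n := by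
    intro i
    rw [eq_div_iff hn0, mul_comm, card_mul_sum_perm_apply]
  rw [Finset.sum_comm]
  simp only [← Finset.mul_sum, h_slot]
  rw [← Finset.sum_mul, h_weight]
  -- Hide the floor so that it is treated as an atom.
  generalize ((n / k : ℕ) : ℝ) = q
  field_simp
  ring
end

section
/- Let k ≥ 1 be a natural number and, for each natural number n ≥ 1, define the real-valued waiting-delay factor g(n) = (1 − (k/(2n))·⌊n/k⌋)·(1 + ⌊n/k⌋). Then g(n) = 1 whenever 1 ≤ n ≤ k, and g(n) > 1 whenever n > k. -/
/-!
With `q = ⌊n/k⌋`, the factor satisfies `g(n) - 1 = q (2n - (k + kq)) / (2n)`. For `n < k` this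
vanishes because `q = 0`, and for `n = k` because `q = 1`. For `n > k` one has `q ≥ 1`, and
`k < n` together with `kq ≤ n` gives `k + kq < 2n`, so it is positive.
-/

/-- The waiting-delay factor of a `k`-CPU server serving `n` tasks. -/
noncomputable def waitingDelayFactor (k n : ℕ) : ℝ :=
  (1 - ((k : ℝ) / (2 * (n : ℝ))) * ((n / k : ℕ) : ℝ)) * (1 + ((n / k : ℕ) : ℝ))

/-- Threshold behavior of the waiting-delay factor
`g(n) = (1 - (k/(2n))·⌊n/k⌋)·(1 + ⌊n/k⌋)`: no queuing delay (`g(n) = 1`)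
when `1 ≤ n ≤ k`, and strictly increased delay (`g(n) > 1`) once `n > k`. -/
theorem waitingDelayFactor_threshold (k : ℕ) (hk : 1 ≤ k) :
    (∀ n : ℕ, 1 ≤ n → n ≤ k → waitingDelayFactor k n = 1)
    ∧ (∀ n : ℕ, k < n → 1 < waitingDelayFactor k n) := by
  have key : ∀ n : ℕ, 1 ≤ n → waitingDelayFactor k n =
      1 + ((n / k : ℕ) : ℝ) * (2 * n - (k + k * ((n / k : ℕ) : ℝ))) / (2 * n) := by
    intro n hn
    have hn0 : (n : ℝ) ≠ 0 := by positivity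
    unfold waitingDelayFactor
    field_simp
    ring
  refine ⟨fun n hn hnk => ?_, fun n hkn => ?_⟩
  · rw [key n hn]
    rcases hnk.lt_or_eq with h | rfl
    · simp [Nat.div_eq_of_lt h]
    · rw [Nat.div_self hn]
      push_cast
      ring
  · rw [key n (by omega)]
    have hq : (0 : ℝ) < ((n / k : ℕ) : ℝ) := by
      exact_mod_cast Nat.div_pos hkn.le hk
    have hmul : (k : ℝ) * ((n / k : ℕ) : ℝ) ≤ n := by
      exact_mod_cast Nat.mul_div_le n k
    have hlt : (k : ℝ) < n := by exact_mod_cast hkn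
    have hn0 : (0 : ℝ) < n := hlt.trans_le' (Nat.cast_nonneg k)
    have hd : (0 : ℝ) < 2 * n - (k + k * ((n / k : ℕ) : ℝ)) := by linarith
    linarith [div_pos (mul_pos hq hd) (mul_pos two_pos hn0)]
end

section
/- Let k ≥ 1 be a natural number and, for each natural number n ≥ 1, define the real-valued waiting-delay factor g(n) = (1 − (k/(2n))·⌊n/k⌋)·(1 + ⌊n/k⌋). Then g is monotone nondecreasing on the positive integers: for all natural numbers 1 ≤ n ≤ n′, g(n) ≤ g(n′). -/
/-- Monotonicity of the waiting-delay factor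
`g(n) = (1 - (k/(2n))·⌊n/k⌋)·(1 + ⌊n/k⌋)` on the positive integers:
for all `1 ≤ n ≤ n'`, `g(n) ≤ g(n')`. -/
theorem waitingDelayFactor_monotone (k : ℕ) (hk : 1 ≤ k) :
    ∀ n n' : ℕ, 1 ≤ n → n ≤ n' →
      waitingDelayFactor k n ≤ waitingDelayFactor k n' := by
  intro n n' hn hnn'
  have hq : n / k ≤ n' / k := Nat.div_le_div_right hnn'
  have hkq : k * (n' / k) ≤ n' := Nat.mul_div_le n' k
  unfold waitingDelayFactor
  generalize n / k = q at *
  generalize n' / k = q' at *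
  have hn0 : (0 : ℝ) < n := by exact_mod_cast hn
  have hnn : (n : ℝ) ≤ n' := by exact_mod_cast hnn'
  have hn0' : (0 : ℝ) < n' := hn0.trans_le hnn
  calc (1 - (k : ℝ) / (2 * n) * q) * (1 + q)
      ≤ (1 - (k : ℝ) / (2 * n') * q) * (1 + q) := by gcongr
    _ ≤ (1 - (k : ℝ) / (2 * n') * q') * (1 + q') := by
      rcases hq.eq_or_lt with rfl | hlt
      · exact le_rfl
      -- As `q + 1 ≤ q'`, one has `k (q + q' + 1) ≤ 2 k q' ≤ 2 n'`.
      have hlt' : (q : ℝ) + 1 ≤ q' := by exact_mod_cast hlt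
      have hkq' : (k : ℝ) * q' ≤ n' := by exact_mod_cast hkq
      have hbound : (k : ℝ) / (2 * n') * (q + q' + 1) ≤ 1 := by
        rw [div_mul_eq_mul_div, div_le_one (by positivity)]
        nlinarith [mul_le_mul_of_nonneg_left hlt' (Nat.cast_nonneg (α := ℝ) k)]
      nlinarith [mul_nonneg (by linarith : (0 : ℝ) ≤ q' - q) (sub_nonneg.2 hbound)]
end
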